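/- Let α : R → S be a homomorphism of commutative semirings such that S is a flat R-module. Then S is a faithful R-module if and only if α is pure. (In particular, for flat algebras, faithfully flat = flat + pure.) -/

import Mathlib

/-!
If `R → S` is pure then `S` reflects isomorphisms by a diagram chase: purity writes `M` and `N`
naturally as equalizers of diagrams built from `S ⊗ M` and `S ⊗ N`, on which `φ` induces
isomorphisms. Flatness plays no role in this direction.

Conversely, let `E` be the equalizer of `S ⊗ M ⇉ S ⊗ S ⊗ M`; purity says that the canonical map
`M → E` is an isomorphism. After applying `S ⊗ _`, flatness identifies `S ⊗ E` with the equalizer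
of `S ⊗ S ⊗ M ⇉ S ⊗ S ⊗ S ⊗ M`. Multiplication of the two leftmost factors `S`
(`mulOuter`) splits this diagram, so its equalizer is also `S ⊗ M`. Hence `S ⊗ M → S ⊗ E` is an
isomorphism, and faithfulness finishes the argument.
-/

universe u

open TensorProduct

/-- `M` is flat over the commutative semiring `R`: tensoring with `M` preserves
equalizers (hence all finite limits). -/
def IsSemiflat (R : Type u) [CommSemiring R] (M : Type u) [AddCommMonoid M] [Module R M] : Prop :=
  ∀ (N P : Type u) [AddCommMonoid N] [AddCommMonoid P] [Module R N] [Module R P]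
    (f g : N →ₗ[R] P),
    Function.Injective (LinearMap.lTensor M (LinearMap.eqLocus f g).subtype) ∧
    LinearMap.range (LinearMap.lTensor M (LinearMap.eqLocus f g).subtype) =
      LinearMap.eqLocus (LinearMap.lTensor M f) (LinearMap.lTensor M g)

/-- An `R`-module `S` is faithful if a linear map `φ` is an isomorphism whenever
`S ⊗ φ` is. -/
def IsFaithfulMod (R : Type u) [CommSemiring R] (S : Type u) [AddCommMonoid S]
    [Module R S] : Prop :=
  ∀ (M N : Type u) [AddCommMonoid M] [AddCommMonoid N] [Module R M] [Module R N]
    (φ : M →ₗ[R] N), Function.Bijective (LinearMap.lTensor S φ) → Function.Bijective φ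

/-- The structure morphism `R → S` is pure: for every `R`-module `M` the diagram
`M → S ⊗ M ⇉ S ⊗ S ⊗ M` (where the first map is `m ↦ 1 ⊗ m` and the parallel maps
insert `1` into the first resp. second `S`-factor) is an equalizer, i.e. `m ↦ 1 ⊗ m`
is injective with image the equalizer of the two parallel maps. -/
def IsPureAlg (R S : Type u) [CommSemiring R] [CommSemiring S] [Algebra R S] : Prop :=
  ∀ (M : Type u) [AddCommMonoid M] [Module R M],
    Function.Injective (TensorProduct.mk R S M 1) ∧
    LinearMap.range (TensorProduct.mk R S M 1) =
      LinearMap.eqLocus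
        (TensorProduct.mk R S (S ⊗[R] M) 1)
        (LinearMap.lTensor S (TensorProduct.mk R S M 1))

/-- The contraction `S ⊗ (S ⊗ P) → S ⊗ P`, `s ⊗ (t ⊗ p) ↦ st ⊗ p`. -/
noncomputable def mulOuter (R S P : Type u) [CommSemiring R] [CommSemiring S] [Algebra R S]
    [AddCommMonoid P] [Module R P] : S ⊗[R] (S ⊗[R] P) →ₗ[R] S ⊗[R] P :=
  (LinearMap.mul' R S).rTensor P ∘ₗ (TensorProduct.assoc R S S P).symm.toLinearMap

section

variable {R S : Type u} [CommSemiring R] [CommSemiring S] [Algebra R S]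

@[simp]
lemma mulOuter_tmul {P : Type u} [AddCommMonoid P] [Module R P] (s t : S) (p : P) :
    mulOuter R S P (s ⊗ₜ (t ⊗ₜ p)) = (s * t) ⊗ₜ p := by
  simp [mulOuter]

lemma mulOuter_lTensor_mk {P : Type u} [AddCommMonoid P] [Module R P] (x : S ⊗[R] P) :
    mulOuter R S P (LinearMap.lTensor S (TensorProduct.mk R S P 1) x) = x := by
  induction x with
  | zero => simp
  | tmul s p => simp
  | add x y hx hy => simp [hx, hy]

lemma mulOuter_lTensor_lTensor_mk {P : Type u} [AddCommMonoid P] [Module R P]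
    (y : S ⊗[R] (S ⊗[R] P)) :
    mulOuter R S (S ⊗[R] P)
        (LinearMap.lTensor S (LinearMap.lTensor S (TensorProduct.mk R S P 1)) y) =
      LinearMap.lTensor S (TensorProduct.mk R S P 1) (mulOuter R S P y) := by
  induction y with
  | zero => simp
  | add x y hx hy => simp only [map_add, hx, hy]
  | tmul s x =>
    induction x with
    | zero => simp
    | add x y hx hy => simp only [TensorProduct.tmul_add, map_add, hx, hy]
    | tmul t p => simp

lemma isFaithfulMod_of_isPureAlg (h : IsPureAlg R S) : IsFaithfulMod R S := by
  intro M N _ _ _ _ φ hφ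
  refine ⟨fun m m' hm => ?_, fun n => ?_⟩
  · apply (h M).1
    apply hφ.1
    simp [hm]
  · obtain ⟨x, hx⟩ := hφ.2 (1 ⊗ₜ n)
    have hinj : Function.Injective (LinearMap.lTensor S (LinearMap.lTensor S φ)) :=
      ((LinearEquiv.ofBijective _ hφ).lTensor S).injective
    have hnat (z : S ⊗[R] M) :
        LinearMap.lTensor S (LinearMap.lTensor S φ)
            (LinearMap.lTensor S (TensorProduct.mk R S M 1) z) =
          LinearMap.lTensor S (TensorProduct.mk R S N 1) (LinearMap.lTensor S φ z) := by
      simp only [← LinearMap.comp_apply, ← LinearMap.lTensor_comp]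
      congr 2
    -- The preimage `x` of `1 ⊗ n` equalizes the two maps, hence comes from `M`.
    have hmem : x ∈ LinearMap.range (TensorProduct.mk R S M 1) := by
      rw [(h M).2, LinearMap.mem_eqLocus]
      apply hinj
      rw [hnat, hx]
      simp [hx]
    obtain ⟨m, rfl⟩ := hmem
    exact ⟨m, (h N).1 (by simpa using hx)⟩

lemma isPureAlg_of_isFaithfulMod (hflat : IsSemiflat R S) (h : IsFaithfulMod R S) :
    IsPureAlg R S := by
  intro M _ _
  set i := TensorProduct.mk R S M 1 with hi
  set a := TensorProduct.mk R S (S ⊗[R] M) 1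
  set b := LinearMap.lTensor S i with hb
  obtain ⟨hinj, hrange⟩ := hflat _ _ a b
  let φ : M →ₗ[R] LinearMap.eqLocus a b :=
    i.codRestrict _ fun m => by simp [a, b, i, LinearMap.mem_eqLocus]
  have hφ : (LinearMap.eqLocus a b).subtype ∘ₗ φ = i := rfl
  have hcomp (x : S ⊗[R] M) :
      LinearMap.lTensor S (LinearMap.eqLocus a b).subtype (LinearMap.lTensor S φ x) = b x := by
    rw [← LinearMap.comp_apply, ← LinearMap.lTensor_comp, hφ]
  have hbij : Function.Bijective φ := by
    refine h _ _ φ ⟨fun x y hxy => ?_, fun e => ?_⟩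
    · rw [← mulOuter_lTensor_mk x, ← mulOuter_lTensor_mk y]
      exact congrArg _ ((hcomp x).symm.trans ((congrArg _ hxy).trans (hcomp y)))
    · set y := LinearMap.lTensor S (LinearMap.eqLocus a b).subtype e with hy
      have hmem : y ∈ LinearMap.eqLocus (LinearMap.lTensor S a) (LinearMap.lTensor S b) :=
        hrange ▸ ⟨e, rfl⟩
      refine ⟨mulOuter R S M y, hinj ?_⟩
      rw [hcomp, ← hy, hb, hi, ← mulOuter_lTensor_lTensor_mk]
      exact (congrArg _ hmem.symm).trans (mulOuter_lTensor_mk y)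
  refine ⟨Subtype.val_injective.comp hbij.1, ?_⟩
  rw [← hφ, LinearMap.range_comp, LinearMap.range_eq_top.2 hbij.2, Submodule.map_top,
    Submodule.range_subtype]

end

/-- For a flat algebra `S` over a commutative semiring `R`, `S` is faithful as an
`R`-module iff `R → S` is pure ("faithfully flat = flat + pure"). -/
theorem faithful_iff_pure_of_flat (R S : Type u) [CommSemiring R] [CommSemiring S]
    [Algebra R S] (hflat : IsSemiflat R S) :
    IsFaithfulMod R S ↔ IsPureAlg R S :=
  ⟨isPureAlg_of_isFaithfulMod hflat, isFaithfulMod_of_isPureAlg⟩
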